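/- For all integers m ≥ 0 and l ∈ ℤ, one has S̃_{m+1,l}(q) = q^{−l} S_{m,l+1}(q) + q^{−m} S̃_{m,l}(q) + S_{m,l−1}(q), an identity in ℤ[q, q⁻¹]. -/

import Mathlib

/-!
Write `j = m - l - μ` and `e(μ) = (μ + l - m)(μ + l) + (μ + 1)(μ - m)`. The `q`-Pascal rule
`C(m+1,μ+1) = C(m,μ) + q^(μ+1) C(m,μ+1)` splits the summand of `S̃_{m+1,l}` at `ν = μ + 1`; its
second part is exactly the summand of `S_{m,l-1}` at `μ + 1`. The first part,
`q^e(μ) C(m,μ) C(μ+1,j)`, is not termwise the sum of the summands of `q^(-l) S_{m,l+1}` and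
`q^(-m) S̃_{m,l}` at `μ`, but the difference is `G(μ+1) - G(μ)`, where
`G(μ) = q^e(μ) (q^(j-μ) - 1) C(m,μ) C(μ,j)` (`corrTerm`, `summand_identity`). As `G` has finite
support, summing over `μ ∈ ℤ` gives the recursion. The telescoping step rests on both forms of the
`q`-Pascal rule and the absorption identities they imply.
-/

open LaurentPolynomial

/-- The Gaussian (q-)binomial coefficient `C(n,k)_q` as a Laurent polynomial in `q`,
defined by the q-Pascal recursion `C(n+1,k+1)_q = C(n,k)_q + q^(k+1) C(n,k+1)_q`. -/
noncomputable def qbinom : ℕ → ℕ → LaurentPolynomial ℤ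
  | _, 0 => 1
  | 0, _ + 1 => 0
  | n + 1, k + 1 => qbinom n k + T ((k : ℤ) + 1) * qbinom n (k + 1)

/-- `C(n,k)_q` for integer arguments, zero unless `0 ≤ k ≤ n`. -/
noncomputable def qbinomZ (n k : ℤ) : LaurentPolynomial ℤ :=
  if 0 ≤ k ∧ k ≤ n then qbinom n.toNat k.toNat else 0

/-- `S_{m,l}(q) = Σ_{ν∈ℤ} q^{(ν+l−m)(ν+l)+ν(ν−m)} C(m,ν)_q C(ν, m−l−ν)_q`. -/
noncomputable def Sq (m : ℕ) (l : ℤ) : LaurentPolynomial ℤ :=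
  ∑ᶠ ν : ℤ,
    T ((ν + l - m) * (ν + l) + ν * (ν - m)) * (qbinomZ m ν * qbinomZ ν (m - l - ν))

/-- `S̃_{m,l}(q) = Σ_{ν∈ℤ} q^{(ν+l−m)(ν+l−1)+ν(ν−m)} C(m,ν)_q C(ν, m−l−ν)_q`. -/
noncomputable def Sqt (m : ℕ) (l : ℤ) : LaurentPolynomial ℤ :=
  ∑ᶠ ν : ℤ,
    T ((ν + l - m) * (ν + l - 1) + ν * (ν - m)) * (qbinomZ m ν * qbinomZ ν (m - l - ν))

/-! ### Gaussian binomials with integer arguments -/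

lemma qbinomZ_of_neg {n k : ℤ} (h : k < 0) : qbinomZ n k = 0 :=
  if_neg (by omega)

lemma qbinom_of_lt : ∀ {n k : ℕ}, n < k → qbinom n k = 0
  | _, 0, h => by omega
  | 0, _ + 1, _ => by simp [qbinom]
  | n + 1, k + 1, h => by
    simp [qbinom, qbinom_of_lt (show n < k by omega), qbinom_of_lt (show n < k + 1 by omega)]

lemma qbinomZ_natCast (n k : ℕ) : qbinomZ n k = qbinom n k := by
  unfold qbinomZ
  split_ifs with h
  · simp
  · exact (qbinom_of_lt (by omega)).symm

lemma qbinomZ_zero {n : ℤ} (hn : 0 ≤ n) : qbinomZ n 0 = 1 := by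
  simp [qbinomZ, hn, qbinom]

lemma qbinomZ_pascal {n : ℤ} (hn : 0 ≤ n) (k : ℤ) :
    qbinomZ (n + 1) k = qbinomZ n (k - 1) + T k * qbinomZ n k := by
  lift n to ℕ using hn
  rcases lt_trichotomy k 0 with hk | rfl | hk
  · simp [qbinomZ_of_neg hk, qbinomZ_of_neg (show k - 1 < 0 by omega)]
  · rw [qbinomZ_zero (by omega), qbinomZ_zero (by omega), qbinomZ_of_neg (by omega)]
    simp
  · obtain ⟨i, rfl⟩ : ∃ i : ℕ, k = ((i + 1 : ℕ) : ℤ) := ⟨(k - 1).toNat, by omega⟩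
    have h1 : ((i + 1 : ℕ) : ℤ) - 1 = i := by push_cast; ring
    have h2 : (n : ℤ) + 1 = ((n + 1 : ℕ) : ℤ) := by push_cast; ring
    rw [h1, h2, qbinomZ_natCast, qbinomZ_natCast, qbinomZ_natCast, qbinom]
    push_cast
    rfl

/-- The `q`-Pascal rule with the power of `q` on the other summand. -/
lemma qbinomZ_pascal' {n : ℤ} (hn : 0 ≤ n) (k : ℤ) :
    qbinomZ (n + 1) k = qbinomZ n k + T (n + 1 - k) * qbinomZ n (k - 1) := by
  induction n, hn using Int.leInduction generalizing k with
  | base =>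
    rw [qbinomZ_pascal le_rfl]
    rcases eq_or_ne k 0 with rfl | h0
    · simp [qbinomZ_of_neg]
    have hk : qbinomZ 0 k = 0 := if_neg (by omega)
    rcases eq_or_ne k 1 with rfl | h1
    · simp [hk]
    have hk' : qbinomZ 0 (k - 1) = 0 := if_neg (by omega)
    simp [hk, hk']
  | succ n hn ih =>
    rw [qbinomZ_pascal (by omega) k]
    have a := ih k
    have b := ih (k - 1)
    have c := qbinomZ_pascal hn k
    have d := qbinomZ_pascal hn (k - 1)
    have e1 : (T k * T (n + 1 - k) : LaurentPolynomial ℤ) = T (n + 1) := by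
      rw [← T_add]; congr 1; ring
    have e2 : (T (n + 1 + 1 - k) * T (k - 1) : LaurentPolynomial ℤ) = T (n + 1) := by
      rw [← T_add]; congr 1; ring
    have e3 : n + 1 - (k - 1) = n + 1 + 1 - k := by ring
    rw [e3] at b
    linear_combination b + T k * a - c - T (n + 1 + 1 - k) * d
      + qbinomZ n (k - 1) * e1 - qbinomZ n (k - 1) * e2

/-- The absorption identity `(1 - q^(n+1-k)) C(n+1,k) = (1 - q^(n+1)) C(n,k)`, obtained by
eliminating `C(n,k-1)` from the two `q`-Pascal rules. -/
lemma qbinomZ_absorb_left {n : ℤ} (hn : 0 ≤ n) (k : ℤ) :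
    (1 - T (n + 1 - k)) * qbinomZ (n + 1) k = (1 - T (n + 1)) * qbinomZ n k := by
  have e : (T (n + 1 - k) * T k : LaurentPolynomial ℤ) = T (n + 1) := by
    rw [← T_add]; congr 1; ring
  linear_combination qbinomZ_pascal' hn k - T (n + 1 - k) * qbinomZ_pascal hn k
    - qbinomZ n k * e

/-- The absorption identity `(1 - q^(k+1)) C(n,k+1) = (1 - q^(n-k)) C(n,k)`, obtained by
equating the two `q`-Pascal rules. -/
lemma qbinomZ_absorb_right {n : ℤ} (hn : 0 ≤ n) (k : ℤ) :
    (1 - T (k + 1)) * qbinomZ n (k + 1) = (1 - T (n - k)) * qbinomZ n k := by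
  have a := qbinomZ_pascal hn (k + 1)
  have b := qbinomZ_pascal' hn (k + 1)
  have e1 : n + 1 - (k + 1) = n - k := by ring
  rw [add_sub_cancel_right] at a b
  rw [e1] at b
  linear_combination a - b

/-! ### The telescoping identity -/

/-- The summand of `S_{m,l}`. -/
noncomputable def sqTerm (m : ℕ) (l ν : ℤ) : LaurentPolynomial ℤ :=
  T ((ν + l - m) * (ν + l) + ν * (ν - m)) * (qbinomZ m ν * qbinomZ ν (m - l - ν))

/-- The summand of `S̃_{m,l}`. -/
noncomputable def sqtTerm (m : ℕ) (l ν : ℤ) : LaurentPolynomial ℤ :=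
  T ((ν + l - m) * (ν + l - 1) + ν * (ν - m)) * (qbinomZ m ν * qbinomZ ν (m - l - ν))

/-- The finitely supported function whose differences measure the failure of the recursion to hold
summand by summand. -/
noncomputable def corrTerm (m : ℕ) (l μ : ℤ) : LaurentPolynomial ℤ :=
  T ((μ + l - m) * (μ + l) + (μ + 1) * (μ - m)) *
    ((T (m - l - μ - μ) - 1) * (qbinomZ m μ * qbinomZ μ (m - l - μ)))

/-- The absorption identities turn `G(μ+1)`, which involves `C(m,μ+1) C(μ+1,j-1)`, into a multiple
of `C(m,μ) C(μ,j-1)`, so that it can be compared with the summands at `μ`. -/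
lemma corrTerm_succ (m : ℕ) (l μ : ℤ) :
    corrTerm m l (μ + 1) =
      T ((μ + l - m) * (μ + l) + (μ + 1) * (μ - m)) *
        (T (μ - (m - l - μ) + 1) * (1 - T (m - μ)) *
          (qbinomZ m μ * qbinomZ μ (m - l - μ - 1))) := by
  unfold corrTerm
  have hj : (m : ℤ) - l - (μ + 1) = m - l - μ - 1 := by ring
  rw [hj]
  rcases lt_or_ge μ 0 with hμ | hμ
  · rw [qbinomZ_of_neg hμ]
    rcases eq_or_ne μ (-1) with rfl | h
    · -- At `μ + 1 = 0` the factor `C(0,k)` forces `k = 0`, where `q^k - 1` vanishes.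
      have h0 : (m : ℤ) - l - -1 - 1 = m - l := by ring
      rw [h0, neg_add_cancel]
      rcases eq_or_ne ((m : ℤ) - l) 0 with h | h
      · simp [h]
      · have hz : qbinomZ 0 ((m : ℤ) - l) = 0 := if_neg (by omega)
        simp [hz]
    · simp [qbinomZ_of_neg (show μ + 1 < 0 by omega)]
  · generalize hJ : (m : ℤ) - l - μ = j
    have a := qbinomZ_absorb_left hμ (j - 1)
    have b := qbinomZ_absorb_right (Int.natCast_nonneg m) μ
    have e1 : (T ((μ + 1 + l - m) * (μ + 1 + l) + (μ + 1 + 1) * (μ + 1 - m)) :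
        LaurentPolynomial ℤ) =
        T ((μ + l - m) * (μ + l) + (μ + 1) * (μ - m)) * T (μ - j + 1) * T (μ + 1 - (j - 1)) := by
      rw [← T_add, ← T_add]; congr 1; subst hJ; ring
    have e2 : (T (μ + 1 - (j - 1)) * T (j - 1 - (μ + 1)) : LaurentPolynomial ℤ) = 1 := by
      rw [← T_add, ← T_zero]; congr 1; ring
    rw [e1]
    linear_combination T ((μ + l - m) * (μ + l) + (μ + 1) * (μ - m)) * T (μ - j + 1) *
      (qbinomZ m (μ + 1) * qbinomZ (μ + 1) (j - 1) * e2 + qbinomZ m (μ + 1) * a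
        + qbinomZ μ (j - 1) * b)

/-- The recursion holds summand by summand up to a difference of `corrTerm`. -/
lemma summand_identity (m : ℕ) (l μ : ℤ) :
    sqtTerm (m + 1) l (μ + 1) =
      T (-l) * sqTerm m (l + 1) μ + T (-(m : ℤ)) * sqtTerm m l μ + sqTerm m (l - 1) (μ + 1)
        + (corrTerm m l (μ + 1) - corrTerm m l μ) := by
  rw [corrTerm_succ]
  unfold sqtTerm sqTerm corrTerm
  push_cast
  have h1 : (m : ℤ) + 1 - l - (μ + 1) = m - l - μ := by ring
  have h2 : (m : ℤ) - (l + 1) - μ = m - l - μ - 1 := by ring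
  have h3 : (m : ℤ) - (l - 1) - (μ + 1) = m - l - μ := by ring
  have a := qbinomZ_pascal (Int.natCast_nonneg m) (μ + 1)
  rw [add_sub_cancel_right] at a
  rw [h1, h2, h3, a]
  generalize hJ : (m : ℤ) - l - μ = j
  generalize hE : (μ + l - m) * (μ + l) + (μ + 1) * (μ - m) = E
  have e1 : (T ((μ + 1 + l - (m + 1)) * (μ + 1 + l - 1) + (μ + 1) * (μ + 1 - (m + 1))) :
      LaurentPolynomial ℤ) = T E := by
    congr 1; subst hE; ring
  have e2 : (T (-l) * T ((μ + (l + 1) - m) * (μ + (l + 1)) + μ * (μ - m)) :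
      LaurentPolynomial ℤ) = T E * T (μ - j + 1) * T (m - μ) := by
    rw [← T_add, ← T_add, ← T_add]; congr 1; subst hE hJ; ring
  have e3 : (T (-(m : ℤ)) * T ((μ + l - m) * (μ + l - 1) + μ * (μ - m)) :
      LaurentPolynomial ℤ) = T E * T (j - μ) := by
    rw [← T_add, ← T_add]; congr 1; subst hE hJ; ring
  have e4 : (T ((μ + 1 + (l - 1) - m) * (μ + 1 + (l - 1)) + (μ + 1) * (μ + 1 - m)) :
      LaurentPolynomial ℤ) = T E * T (μ + 1) := by
    rw [← T_add]; congr 1; subst hE; ring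
  rw [← mul_assoc (T (-l)), ← mul_assoc (T (-(m : ℤ))), e1, e2, e3, e4]
  rcases lt_or_ge μ 0 with hμ | hμ
  · rw [qbinomZ_of_neg hμ]
    ring
  · have b := qbinomZ_pascal' hμ j
    have e5 : μ + 1 - j = μ - j + 1 := by ring
    rw [e5] at b
    linear_combination T E * qbinomZ m μ * b

/-! ### Summation -/

lemma finite_support_of_qbinomZ (m : ℕ) {f : ℤ → LaurentPolynomial ℤ}
    (hf : ∀ ν, qbinomZ m ν = 0 → f ν = 0) : f.support.Finite := by
  refine (Set.finite_Icc (0 : ℤ) m).subset fun ν hν => ?_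
  by_contra h
  exact hν (hf ν (if_neg h))

lemma finsum_int_succ (f : ℤ → LaurentPolynomial ℤ) : ∑ᶠ ν, f (ν + 1) = ∑ᶠ ν, f ν :=
  finsum_comp_equiv (Equiv.addRight (1 : ℤ)) (f := f)

lemma finite_support_succ {f : ℤ → LaurentPolynomial ℤ} (hf : f.support.Finite) :
    (fun ν => f (ν + 1)).support.Finite :=
  hf.preimage (add_left_injective (1 : ℤ)).injOn

/-- St_{m+1,l} = q^{-l} S_{m,l+1} + q^{-m} St_{m,l} + S_{m,l-1}. -/
theorem St_succ_rec2 (m : ℕ) (l : ℤ) :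
    Sqt (m + 1) l =
      T (-l) * Sq m (l + 1) + T (-(m : ℤ)) * Sqt m l + Sq m (l - 1) := by
  have hS : ∀ l, (sqTerm m l).support.Finite := fun l =>
    finite_support_of_qbinomZ m fun ν h => by simp [sqTerm, h]
  have hSt : (sqtTerm m l).support.Finite :=
    finite_support_of_qbinomZ m fun ν h => by simp [sqtTerm, h]
  have hG : (corrTerm m l).support.Finite :=
    finite_support_of_qbinomZ m fun ν h => by simp [corrTerm, h]
  have h1 : (fun μ => T (-l) * sqTerm m (l + 1) μ).support.Finite :=
    (hS _).subset (Function.support_mul_subset_right _ _)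
  have h2 : (fun μ => T (-(m : ℤ)) * sqtTerm m l μ).support.Finite :=
    hSt.subset (Function.support_mul_subset_right _ _)
  have h12 := (h1.union h2).subset (Function.support_add _ _)
  have h3 := finite_support_succ (hS (l - 1))
  have h123 := (h12.union h3).subset (Function.support_add _ _)
  have hG' := finite_support_succ hG
  have hGG := (hG'.union hG).subset (Function.support_sub _ _)
  calc Sqt (m + 1) l = ∑ᶠ μ, sqtTerm (m + 1) l (μ + 1) := (finsum_int_succ _).symm
    _ = ∑ᶠ μ, (T (-l) * sqTerm m (l + 1) μ + T (-(m : ℤ)) * sqtTerm m l μ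
          + sqTerm m (l - 1) (μ + 1) + (corrTerm m l (μ + 1) - corrTerm m l μ)) :=
        finsum_congr (summand_identity m l)
    _ = T (-l) * ∑ᶠ μ, sqTerm m (l + 1) μ + T (-(m : ℤ)) * ∑ᶠ μ, sqtTerm m l μ
          + ∑ᶠ μ, sqTerm m (l - 1) μ := by
        rw [finsum_add_distrib h123 hGG, finsum_add_distrib h12 h3, finsum_add_distrib h1 h2,
          finsum_sub_distrib hG' hG, finsum_int_succ, finsum_int_succ, sub_self, add_zero,
          mul_finsum' _ _ (hS _), mul_finsum' _ _ hSt]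
    _ = _ := rfl
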